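/- Fix A > 0 and a complex number β_L with Re(β_L) > 0. Then lim_{J→∞} √(2J) · e^{−4π√(A·J)} · F_vac(β_L, J) = √(2π/β_L) · e^{4π²A/β_L} · (1 − e^{−4π²/β_L}), where the square root is the principal branch. -/

import Mathlib

open MeasureTheory Filter Topology Real

noncomputable section

/-- The contour point `z = α_J + i t` with `α_J = 2π√(A/J)`. -/
def zline (A : ℝ) (J : ℤ) (t : ℝ) : ℂ :=
  ((2 * π * Real.sqrt (A / (J : ℝ)) : ℝ) : ℂ) + (t : ℂ) * Complex.I

/-- The vacuum term `F_vac(β_L, J)` (principal branch square root). -/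
def Fvac (A : ℝ) (βL : ℂ) (J : ℤ) : ℂ :=
  ∫ t in (-π)..π, (1 / (2 * π) : ℝ) •
    (Complex.exp (zline A J t * (J : ℂ)) *
      ((4 * (π : ℂ) ^ 2) / (zline A J t * (βL - zline A J t))) ^ ((1 : ℂ) / 2) *
      Complex.exp ((4 * (π : ℂ) ^ 2 * (A : ℂ)) / (βL - zline A J t) +
        (4 * (π : ℂ) ^ 2 * (A : ℂ)) / zline A J t) *
      (1 - Complex.exp (-(4 * (π : ℂ) ^ 2) / (βL - zline A J t))) *
      (1 - Complex.exp (-(4 * (π : ℂ) ^ 2) / zline A J t)))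

/-!
Write `a = 4π²A`. On the contour the phase is `z J + a / z`, with saddle point `√(a / J)`; along
`z = √(a / J) q`, `q = 1 + i s`, it equals `√(a J) (q + 1 / q) = 2 √(a J) - √(a J) s² / q`. With
`x = (a J)^(-1/4)` and `s = u x` the integrand becomes `e^(-u² / (1 + i u x))` times the amplitude
at `a x² (1 + i u x)`, and one lets `x → 0`. Since `|u| x³` stays bounded on the contour, the
Gaussian factor is `O(1 / (1 + u²))` uniformly in `x`, and dominated convergence applies.

Both `z` and `β_L - z` lie in the right half-plane, so the principal square root is multiplicative
there and the integrand is `2π e^(z J) χ(z) χ(β_L - z)` with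
`χ(w) = w^(-1/2) e^(a / w) (1 - e^(-4π² / w))`. The factor `1 - e^(-4π² / z)` has no limit at
`z = 0`, but it tends to `1` when `Re (1 / z) → ∞`, which is how the rescaled contour approaches
`0`.
-/

open Complex (I)

lemma mul_cpow_of_re_pos {z w : ℂ} (hz : 0 < z.re) (hw : 0 < w.re) (s : ℂ) :
    (z * w) ^ s = z ^ s * w ^ s := by
  have hz0 : z ≠ 0 := Complex.ne_zero_of_re_pos hz
  have hw0 : w ≠ 0 := Complex.ne_zero_of_re_pos hw
  have hz_arg := abs_lt.1 (Complex.abs_arg_lt_pi_div_two_iff.2 (Or.inl hz))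
  have hw_arg := abs_lt.1 (Complex.abs_arg_lt_pi_div_two_iff.2 (Or.inl hw))
  have harg : z.arg + w.arg ∈ Set.Ioc (-π) π := ⟨by linarith, by linarith⟩
  rw [Complex.cpow_def_of_ne_zero (mul_ne_zero hz0 hw0), Complex.cpow_def_of_ne_zero hz0,
    Complex.cpow_def_of_ne_zero hw0, Complex.log_mul hz0 hw0 harg, add_mul, Complex.exp_add]

lemma re_inv_pos {z : ℂ} (hz : 0 < z.re) : 0 < (z⁻¹).re := by
  rw [Complex.inv_re]
  exact div_pos hz (Complex.normSq_pos.2 (Complex.ne_zero_of_re_pos hz))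

lemma inv_cpow_of_re_pos {z : ℂ} (hz : 0 < z.re) (s : ℂ) : z⁻¹ ^ s = z ^ (-s) := by
  rw [Complex.inv_cpow z s (Complex.slitPlane_arg_ne_pi (Or.inl hz)), Complex.cpow_neg]

lemma ofReal_div_cpow_of_re_pos {r : ℝ} (hr : 0 < r) {z : ℂ} (hz : 0 < z.re) (s : ℂ) :
    (r / z) ^ s = r ^ s * z ^ (-s) := by
  rw [div_eq_mul_inv, mul_cpow_of_re_pos (by simpa using hr) (re_inv_pos hz),
    inv_cpow_of_re_pos hz]

lemma ofReal_cpow_one_half {r : ℝ} (hr : 0 ≤ r) : (r : ℂ) ^ ((1 : ℂ) / 2) = √r := by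
  rw [Real.sqrt_eq_rpow, Complex.ofReal_cpow hr]
  norm_num

lemma one_add_mul_I_ne_zero (y : ℝ) : (1 + y * I : ℂ) ≠ 0 :=
  Complex.ne_zero_of_re_pos (by simp)

lemma one_le_norm_one_add_mul_I (y : ℝ) : 1 ≤ ‖(1 + y * I : ℂ)‖ := by
  simpa using Complex.abs_re_le_norm (1 + y * I)

lemma one_add_mul_I_inv_re (y : ℝ) : ((1 + y * I : ℂ)⁻¹).re = (1 + y ^ 2)⁻¹ := by
  simp [Complex.inv_re, Complex.normSq_apply, sq]

/-- The filter of approach to `0` with `Re (1 / z) → ∞`. Its basic sets are the discs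
`Re (1 / z) > R` (horodiscs of the right half-plane), which are tangent to the imaginary axis
at `0`. -/
def horocyclicZero : Filter ℂ :=
  comap (fun z => (z⁻¹).re) atTop

lemma horocyclicZero_le_nhds : horocyclicZero ≤ 𝓝 0 := by
  have hre : Tendsto (fun z : ℂ => (z⁻¹).re) horocyclicZero atTop := tendsto_comap
  have hinv : Tendsto (fun z : ℂ => z⁻¹) horocyclicZero (Bornology.cobounded ℂ) :=
    tendsto_norm_atTop_iff_cobounded.1
      (tendsto_atTop_mono (fun z => Complex.re_le_norm z⁻¹) hre)
  simpa [Function.comp_def, Tendsto] using tendsto_inv₀_cobounded.comp hinv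

lemma tendsto_exp_neg_div_horocyclicZero {c : ℝ} (hc : 0 < c) :
    Tendsto (fun z : ℂ => Complex.exp (-c / z)) horocyclicZero (𝓝 0) := by
  have hre (z : ℂ) : (-(c : ℂ) / z).re = -c * (z⁻¹).re := by
    rw [div_eq_mul_inv, ← Complex.ofReal_neg, Complex.re_ofReal_mul]
  simp only [Complex.tendsto_exp_nhds_zero_iff, hre]
  exact tendsto_comap.const_mul_atTop_of_neg (neg_neg_of_pos hc)

lemma tendsto_nhdsGT_zero_of_continuous {f : ℝ → ℝ} (hf : Continuous f) (hf_zero : f 0 = 0)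
    (hf_pos : ∀ x, 0 < x → 0 < f x) : Tendsto f (𝓝[>] 0) (𝓝[>] 0) := by
  have hmaps : Set.MapsTo f (Set.Ioi 0) (Set.Ioi 0) := hf_pos
  simpa only [hf_zero] using hf.continuousWithinAt.tendsto_nhdsWithin hmaps (x := 0)

/-- The vertical line through the saddle point `a x²`, with the height `a x³ u` measured in the
width `a x³` of the saddle. -/
def rescaledContour (a x u : ℝ) : ℂ :=
  (a * x ^ 2 : ℝ) * (1 + (u * x : ℝ) * I)

lemma rescaledContour_eq (a x u : ℝ) :
    rescaledContour a x u = (a * x ^ 2 : ℝ) + (u * (a * x ^ 3) : ℝ) * I := by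
  rw [rescaledContour]
  push_cast
  ring

lemma tendsto_rescaledContour_horocyclicZero {a : ℝ} (ha : 0 < a) (u : ℝ) :
    Tendsto (fun x : ℝ => rescaledContour a x u) (𝓝[>] 0) horocyclicZero := by
  have hre (x : ℝ) : (rescaledContour a x u)⁻¹.re = (a * x ^ 2 * (1 + (u * x) ^ 2))⁻¹ := by
    rw [rescaledContour, mul_inv, ← Complex.ofReal_inv, Complex.re_ofReal_mul,
      one_add_mul_I_inv_re, ← mul_inv]
  simp only [horocyclicZero, tendsto_comap_iff, Function.comp_def, hre]
  exact Tendsto.inv_tendsto_nhdsGT_zero <|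
    tendsto_nhdsGT_zero_of_continuous (by fun_prop) (by simp) fun x hx => by positivity

/-- For `|u x| ≤ 1` the exponent is at least `u² / 2`; for `|u x| ≥ 1` it is at least
`1 / (2 x²)`, whose exponential beats the polynomial growth `u² ≤ K² / x⁶`. -/
lemma exp_neg_sq_div_one_add_sq_le {K x u : ℝ} (hx : 0 < x) (hx_le : x ≤ 1)
    (hu : |u| * x ^ 3 ≤ K) :
    Real.exp (-(u ^ 2 / (1 + (u * x) ^ 2))) ≤ (2 + 96 * K ^ 2) * (1 + u ^ 2)⁻¹ := by
  set y := u ^ 2 / (1 + (u * x) ^ 2) with hy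
  rw [← div_eq_mul_inv, le_div_iff₀ (by positivity), Real.exp_neg,
    inv_mul_le_iff₀ (Real.exp_pos _)]
  rcases le_total ((u * x) ^ 2) 1 with hux | hux
  · have hy_ge : u ^ 2 / 2 ≤ y :=
      div_le_div_of_nonneg_left (sq_nonneg u) (by positivity) (by linarith)
    have hexp : 1 + u ^ 2 / 2 ≤ Real.exp y := by linarith [Real.add_one_le_exp y]
    nlinarith [mul_nonneg (Real.exp_pos y).le (sq_nonneg K)]
  · have hy_ge : 1 / (2 * x ^ 2) ≤ y := by
      rw [hy, div_le_div_iff₀ (by positivity) (by positivity)]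
      linarith
    have hexp : 1 / (48 * x ^ 6) ≤ Real.exp y :=
      calc 1 / (48 * x ^ 6) = (1 / (2 * x ^ 2)) ^ 3 / (Nat.factorial 3 : ℝ) := by
            norm_num [Nat.factorial]; ring
        _ ≤ y ^ 3 / (Nat.factorial 3 : ℝ) := by gcongr
        _ ≤ Real.exp y := Real.pow_div_factorial_le_exp y (by positivity) 3
    have hu_sq : u ^ 2 ≤ K ^ 2 / x ^ 6 := by
      rw [le_div_iff₀ (by positivity)]
      calc u ^ 2 * x ^ 6 = (|u| * x ^ 3) ^ 2 := by rw [mul_pow, sq_abs]; ring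
        _ ≤ K ^ 2 := by gcongr
    have hu_one : 1 ≤ u ^ 2 := by
      nlinarith [mul_nonneg (sq_nonneg u) (show 0 ≤ 1 - x ^ 2 by nlinarith)]
    calc 1 + u ^ 2 ≤ 2 * (K ^ 2 / x ^ 6) := by linarith
      _ = 1 / (48 * x ^ 6) * (96 * K ^ 2) := by field_simp; ring
      _ ≤ Real.exp y * (2 + 96 * K ^ 2) := by gcongr; linarith

/-- The Gaussian `e^(-u²)` deformed by the quadratic-over-linear phase of the contour at scale
`x`. -/
def tiltedGaussian (x u : ℝ) : ℂ :=
  Complex.exp (-(u : ℂ) ^ 2 / (1 + (u * x : ℝ) * I))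

lemma measurable_tiltedGaussian (x : ℝ) : Measurable (tiltedGaussian x) := by
  unfold tiltedGaussian
  fun_prop

lemma norm_tiltedGaussian_le {K x u : ℝ} (hx : 0 < x) (hx_le : x ≤ 1)
    (hu : |u| * x ^ 3 ≤ K) :
    ‖tiltedGaussian x u‖ ≤ (2 + 96 * K ^ 2) * (1 + u ^ 2)⁻¹ := by
  have hre : (-(u : ℂ) ^ 2 / (1 + (u * x : ℝ) * I)).re = -(u ^ 2 / (1 + (u * x) ^ 2)) := by
    rw [div_eq_mul_inv, ← Complex.ofReal_pow, ← Complex.ofReal_neg, Complex.re_ofReal_mul,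
      one_add_mul_I_inv_re, ← div_eq_mul_inv, neg_div]
  rw [tiltedGaussian, Complex.norm_exp, hre]
  exact exp_neg_sq_div_one_add_sq_le hx hx_le hu

lemma tendsto_tiltedGaussian (u : ℝ) :
    Tendsto (fun x : ℝ => tiltedGaussian x u) (𝓝[>] 0) (𝓝 (Complex.exp (-(u : ℂ) ^ 2))) := by
  have hcont : Continuous fun x : ℝ => tiltedGaussian x u :=
    (continuous_const.div (by fun_prop) fun x => one_add_mul_I_ne_zero (u * x)).cexp
  simpa [tiltedGaussian] using (hcont.tendsto 0).mono_left nhdsWithin_le_nhds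

lemma integral_exp_neg_sq : ∫ u : ℝ, Complex.exp (-(u : ℂ) ^ 2) = √π := by
  rw [← div_one π, ← integral_gaussian 1, ← integral_complex_ofReal]
  simp

lemma norm_indicator_tiltedGaussian_mul_le {R : ℝ → ℝ} {G : ℝ → ℝ → ℂ} {K C : ℝ}
    (hR : Tendsto R (𝓝[>] 0) atTop) (hRK : ∀ᶠ x in 𝓝[>] 0, R x * x ^ 3 ≤ K)
    (hG_bdd : ∀ᶠ x in 𝓝[>] 0, ∀ u, |u| ≤ R x → ‖G x u‖ ≤ C) :
    ∀ᶠ x in 𝓝[>] (0 : ℝ), ∀ᵐ u : ℝ,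
      ‖(Set.Ioc (-R x) (R x)).indicator (fun u => tiltedGaussian x u * G x u) u‖ ≤
        (2 + 96 * K ^ 2) * (1 + u ^ 2)⁻¹ * C := by
  have hx_le : ∀ᶠ x : ℝ in 𝓝[>] 0, x ≤ 1 := nhdsWithin_le_nhds (Iic_mem_nhds one_pos)
  filter_upwards [hRK, hG_bdd, hR.eventually_ge_atTop 0, hx_le, self_mem_nhdsWithin]
    with x hxK hxG hxR hx_le (hx : 0 < x)
  refine Eventually.of_forall fun u => ?_
  have hC : 0 ≤ C := (norm_nonneg _).trans (hxG 0 (by simpa using hxR))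
  rw [norm_indicator_eq_indicator_norm]
  refine Set.indicator_apply_le' (fun hu => ?_) fun _ => by positivity
  have hu_abs : |u| ≤ R x := abs_le.2 ⟨hu.1.le, hu.2⟩
  have huK : |u| * x ^ 3 ≤ K := le_trans (by gcongr) hxK
  rw [norm_mul]
  exact mul_le_mul (norm_tiltedGaussian_le hx hx_le huK) (hxG u hu_abs)
    (norm_nonneg _) (by positivity)

theorem tendsto_integral_tiltedGaussian_mul {R : ℝ → ℝ} {G : ℝ → ℝ → ℂ} {K C : ℝ}
    {L : ℂ} (hR : Tendsto R (𝓝[>] 0) atTop) (hRK : ∀ᶠ x in 𝓝[>] 0, R x * x ^ 3 ≤ K)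
    (hG_meas : ∀ x, Measurable (G x))
    (hG_bdd : ∀ᶠ x in 𝓝[>] 0, ∀ u, |u| ≤ R x → ‖G x u‖ ≤ C)
    (hG_lim : ∀ u, Tendsto (fun x => G x u) (𝓝[>] 0) (𝓝 L)) :
    Tendsto (fun x : ℝ => ∫ u in (-R x)..(R x), tiltedGaussian x u * G x u)
      (𝓝[>] 0) (𝓝 (√π * L)) := by
  set f : ℝ → ℝ → ℂ := fun x u => tiltedGaussian x u * G x u
  have hf_meas (x : ℝ) : Measurable (f x) := (measurable_tiltedGaussian x).mul (hG_meas x)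
  have hR_nonneg : ∀ᶠ x in 𝓝[>] (0 : ℝ), 0 ≤ R x := hR.eventually_ge_atTop 0
  have hf_lim (u : ℝ) : Tendsto (fun x => (Set.Ioc (-R x) (R x)).indicator (f x) u) (𝓝[>] 0)
      (𝓝 (Complex.exp (-(u : ℂ) ^ 2) * L)) := by
    refine ((tendsto_tiltedGaussian u).mul (hG_lim u)).congr' ?_
    filter_upwards [hR.eventually_gt_atTop |u|] with x hxu
    have hu : u ∈ Set.Ioc (-R x) (R x) := ⟨(abs_lt.1 hxu).1, (abs_lt.1 hxu).2.le⟩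
    exact (Set.indicator_of_mem hu (f x)).symm
  have hlim := tendsto_integral_filter_of_dominated_convergence _
    (Eventually.of_forall fun x =>
      ((hf_meas x).indicator measurableSet_Ioc).aestronglyMeasurable)
    (norm_indicator_tiltedGaussian_mul_le hR hRK hG_bdd)
    ((integrable_inv_one_add_sq.const_mul _).mul_const C) (Eventually.of_forall hf_lim)
  rw [integral_mul_const, integral_exp_neg_sq] at hlim
  refine hlim.congr' ?_
  filter_upwards [hR_nonneg] with x hxR
  rw [integral_indicator measurableSet_Ioc, intervalIntegral.integral_of_le (by linarith)]

/-- The integrand `e^(z J + a / z) z^(-ν) g(z)`; on the positive axis its phase has the saddle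
point `√(a / J)`, and `g` is the slowly varying amplitude. -/
def saddleIntegrand (a ν J : ℝ) (g : ℂ → ℂ) (z : ℂ) : ℂ :=
  Complex.exp (z * J + a / z) * z ^ (-ν : ℂ) * g z

lemma saddle_phase_eq {a x : ℝ} (ha : a ≠ 0) (hx : x ≠ 0) (u : ℝ) :
    rescaledContour a x u * ((a * x ^ 4)⁻¹ : ℝ) + a / rescaledContour a x u =
      (2 / x ^ 2 : ℝ) + -(u : ℂ) ^ 2 / (1 + (u * x : ℝ) * I) := by
  have hq := one_add_mul_I_ne_zero (u * x)
  rw [rescaledContour]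
  set q : ℂ := 1 + (u * x : ℝ) * I with hq_def
  have hq_sq : (u : ℂ) ^ 2 * x ^ 2 = -(q - 1) ^ 2 := by
    rw [hq_def]
    push_cast
    linear_combination (u * x : ℂ) ^ 2 * Complex.I_sq
  have ha' : (a : ℂ) ≠ 0 := Complex.ofReal_ne_zero.2 ha
  have hx' : (x : ℂ) ≠ 0 := Complex.ofReal_ne_zero.2 hx
  push_cast
  field_simp
  linear_combination hq_sq

/-- The factor `z^(-ν) g(z)` at `z = rescaledContour a x u`, divided by `(a x²)^(-ν)`. -/
def rescaledAmplitude (a ν : ℝ) (g : ℂ → ℂ) (x u : ℝ) : ℂ :=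
  (1 + (u * x : ℝ) * I) ^ (-ν : ℂ) * g (rescaledContour a x u)

lemma saddleIntegrand_rescaled {a x : ℝ} (ha : 0 < a) (hx : 0 < x) (ν : ℝ) (g : ℂ → ℂ) (u : ℝ) :
    saddleIntegrand a ν (a * x ^ 4)⁻¹ g (rescaledContour a x u) =
      (Real.exp (2 / x ^ 2) * (a * x ^ 2) ^ (-ν) : ℝ) *
        (tiltedGaussian x u * rescaledAmplitude a ν g x u) := by
  have hs : 0 < a * x ^ 2 := by positivity
  rw [saddleIntegrand, saddle_phase_eq ha.ne' hx.ne', Complex.exp_add, rescaledContour,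
    mul_cpow_of_re_pos (by simpa only [Complex.ofReal_re] using hs) (by simp),
    Complex.ofReal_mul (Real.exp _), Complex.ofReal_exp, Complex.ofReal_cpow hs.le,
    Complex.ofReal_neg ν, tiltedGaussian, rescaledAmplitude, rescaledContour]
  ring

lemma integral_saddleIntegrand_eq {a x : ℝ} (ha : 0 < a) (hx : 0 < x) (T ν : ℝ) (g : ℂ → ℂ) :
    ((a * x ^ 2) ^ (ν - 1) * x⁻¹ * Real.exp (-(2 / x ^ 2)) : ℝ) *
        ∫ t in (-T)..T, saddleIntegrand a ν (a * x ^ 4)⁻¹ g ((a * x ^ 2 : ℝ) + t * I) =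
      ∫ u in (-(T / (a * x ^ 3)))..(T / (a * x ^ 3)),
        tiltedGaussian x u * rescaledAmplitude a ν g x u := by
  have hs : 0 < a * x ^ 2 := by positivity
  have hscale : a * x ^ 3 ≠ 0 := by positivity
  have hconst : (a * x ^ 2) ^ (ν - 1) * x⁻¹ * Real.exp (-(2 / x ^ 2)) *
      ((a * x ^ 3) * (Real.exp (2 / x ^ 2) * (a * x ^ 2) ^ (-ν))) = 1 := by
    rw [Real.rpow_sub_one hs.ne', Real.rpow_neg hs.le, Real.exp_neg]
    field_simp
  have hsubst := intervalIntegral.smul_integral_comp_mul_right (a := -(T / (a * x ^ 3)))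
    (b := T / (a * x ^ 3))
    (fun t : ℝ => saddleIntegrand a ν (a * x ^ 4)⁻¹ g ((a * x ^ 2 : ℝ) + t * I)) (a * x ^ 3)
  rw [neg_mul, div_mul_cancel₀ T hscale] at hsubst
  simp only [← rescaledContour_eq, saddleIntegrand_rescaled ha hx] at hsubst
  rw [← hsubst, intervalIntegral.integral_const_mul, Complex.real_smul, ← mul_assoc, ← mul_assoc,
    ← Complex.ofReal_mul, ← Complex.ofReal_mul, mul_assoc _ (a * x ^ 3), hconst,
    Complex.ofReal_one, one_mul]

section SaddlePoint

variable {a T ν C : ℝ} {g : ℂ → ℂ} {L : ℂ}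

lemma norm_rescaledAmplitude_le (ha : 0 < a) (hν : 0 ≤ ν)
    (hg_bdd : ∀ᶠ s : ℝ in 𝓝[>] 0, ∀ t : ℝ, |t| ≤ T → ‖g (s + t * I)‖ ≤ C) :
    ∀ᶠ x : ℝ in 𝓝[>] 0, ∀ u : ℝ, |u| ≤ T / (a * x ^ 3) →
      ‖rescaledAmplitude a ν g x u‖ ≤ C := by
  have hs : Tendsto (fun x : ℝ => a * x ^ 2) (𝓝[>] 0) (𝓝[>] 0) :=
    tendsto_nhdsGT_zero_of_continuous (by fun_prop) (by simp) fun x hx => by positivity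
  filter_upwards [hs.eventually hg_bdd, self_mem_nhdsWithin] with x hxg (hx : 0 < x) u hu
  have ht : |u * (a * x ^ 3)| ≤ T := by
    rwa [abs_mul, abs_of_pos (by positivity : 0 < a * x ^ 3), ← le_div_iff₀ (by positivity)]
  have hpow : ‖(1 + (u * x : ℝ) * I : ℂ) ^ (-ν : ℂ)‖ ≤ 1 := by
    rw [← Complex.ofReal_neg, Complex.norm_cpow_real]
    exact Real.rpow_le_one_of_one_le_of_nonpos (one_le_norm_one_add_mul_I _) (neg_nonpos.2 hν)
  rw [rescaledAmplitude, norm_mul, rescaledContour_eq]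
  exact (mul_le_of_le_one_left (norm_nonneg _) hpow).trans (hxg _ ht)

lemma measurable_rescaledAmplitude (a ν x : ℝ) (hg_meas : Measurable g) :
    Measurable (rescaledAmplitude a ν g x) := by
  unfold rescaledAmplitude rescaledContour
  fun_prop

lemma tendsto_rescaledAmplitude (ha : 0 < a) (ν : ℝ) (hg_lim : Tendsto g horocyclicZero (𝓝 L))
    (u : ℝ) :
    Tendsto (fun x : ℝ => rescaledAmplitude a ν g x u) (𝓝[>] 0) (𝓝 L) := by
  have hpow : Continuous fun x : ℝ => (1 + (u * x : ℝ) * I : ℂ) ^ (-ν : ℂ) :=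
    Continuous.cpow (by fun_prop) continuous_const fun x => Or.inl (by simp)
  have hpow_lim := (hpow.tendsto 0).mono_left (nhdsWithin_le_nhds (s := Set.Ioi 0))
  simpa [rescaledAmplitude] using
    hpow_lim.mul (hg_lim.comp (tendsto_rescaledContour_horocyclicZero ha u))

lemma tendsto_integral_saddleIntegrand_rescaled (ha : 0 < a) (hT : 0 < T) (hν : 0 ≤ ν)
    (hg_meas : Measurable g)
    (hg_bdd : ∀ᶠ s : ℝ in 𝓝[>] 0, ∀ t : ℝ, |t| ≤ T → ‖g (s + t * I)‖ ≤ C)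
    (hg_lim : Tendsto g horocyclicZero (𝓝 L)) :
    Tendsto (fun x : ℝ =>
        (((a * x ^ 2) ^ (ν - 1) * x⁻¹ * Real.exp (-(2 / x ^ 2)) : ℝ) : ℂ) *
          ∫ t in (-T)..T, saddleIntegrand a ν (a * x ^ 4)⁻¹ g ((a * x ^ 2 : ℝ) + t * I))
      (𝓝[>] 0) (𝓝 (√π * L)) := by
  have hR : Tendsto (fun x : ℝ => T / (a * x ^ 3)) (𝓝[>] 0) atTop := by
    have hcube : Tendsto (fun x : ℝ => (x⁻¹) ^ 3) (𝓝[>] 0) atTop :=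
      (tendsto_pow_atTop three_ne_zero).comp tendsto_inv_nhdsGT_zero
    refine (hcube.const_mul_atTop (div_pos hT ha)).congr fun x => ?_
    rw [inv_pow, ← div_eq_mul_inv, div_div]
  have hRK : ∀ᶠ x : ℝ in 𝓝[>] 0, T / (a * x ^ 3) * x ^ 3 ≤ T / a := by
    filter_upwards [self_mem_nhdsWithin] with x (hx : 0 < x)
    exact le_of_eq (by field_simp)
  have hlim := tendsto_integral_tiltedGaussian_mul hR hRK
    (fun x => measurable_rescaledAmplitude a ν x hg_meas)
    (norm_rescaledAmplitude_le ha hν hg_bdd) (tendsto_rescaledAmplitude ha ν hg_lim)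
  refine hlim.congr' ?_
  filter_upwards [self_mem_nhdsWithin] with x hx
  exact (integral_saddleIntegrand_eq ha hx T ν g).symm

theorem tendsto_integral_saddleIntegrand (ha : 0 < a) (hT : 0 < T) (hν : 0 ≤ ν)
    (hg_meas : Measurable g)
    (hg_bdd : ∀ᶠ s : ℝ in 𝓝[>] 0, ∀ t : ℝ, |t| ≤ T → ‖g (s + t * I)‖ ≤ C)
    (hg_lim : Tendsto g horocyclicZero (𝓝 L)) :
    Tendsto (fun J : ℝ =>
        ((√(a / J) ^ (ν - 1) * √(√(a * J)) * Real.exp (-(2 * √(a * J))) : ℝ) : ℂ) *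
          ∫ t in (-T)..T, saddleIntegrand a ν J g (√(a / J) + t * I))
      atTop (𝓝 (√π * L)) := by
  have hscale : Tendsto (fun J : ℝ => (√(√(a * J)))⁻¹) atTop (𝓝[>] 0) :=
    tendsto_inv_atTop_nhdsGT_zero.comp <| Real.tendsto_sqrt_atTop.comp <|
      Real.tendsto_sqrt_atTop.comp <| tendsto_id.const_mul_atTop ha
  refine ((tendsto_integral_saddleIntegrand_rescaled ha hT hν hg_meas hg_bdd hg_lim).comp
    hscale).congr' ?_
  filter_upwards [eventually_gt_atTop 0] with J hJ
  have hsq : (√(√(a * J)))⁻¹ ^ 2 = (√(a * J))⁻¹ := by rw [inv_pow, Real.sq_sqrt (by positivity)]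
  have hfourth : (a * (√(√(a * J)))⁻¹ ^ 4)⁻¹ = J := by
    rw [show (√(√(a * J)))⁻¹ ^ 4 = ((√(√(a * J)))⁻¹ ^ 2) ^ 2 by ring, hsq, inv_pow,
      Real.sq_sqrt (by positivity)]
    field_simp
  have hsaddle : a * (√(a * J))⁻¹ = √(a / J) := by
    rw [Real.sqrt_mul ha.le, Real.sqrt_div ha.le]
    field_simp
    exact (Real.sq_sqrt ha.le).symm
  simp only [Function.comp_apply, hfourth, hsaddle, inv_inv, hsq, div_inv_eq_mul]

end SaddlePoint

/-- The modular transform of the vacuum character, up to the constant `2π`; the square root is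
taken as `w^(-1/2)` so that it factors over products in the right half-plane. -/
def vacChar (a : ℝ) (w : ℂ) : ℂ :=
  w ^ (-(1 / 2) : ℂ) * Complex.exp (a / w) * (1 - Complex.exp (-(4 * (π : ℂ) ^ 2) / w))

/-- The amplitude in `e^(z J) χ(z) χ(β - z)` once the saddle phase and `z^(-1/2)` are split off,
where `χ` is `vacChar a`. -/
def vacAmplitude (a : ℝ) (β z : ℂ) : ℂ :=
  (1 - Complex.exp (-(4 * (π : ℂ) ^ 2) / z)) * vacChar a (β - z)

lemma saddleIntegrand_vacAmplitude (a J : ℝ) (β z : ℂ) :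
    saddleIntegrand a (1 / 2) J (vacAmplitude a β) z =
      Complex.exp (z * J) * vacChar a z * vacChar a (β - z) := by
  simp only [saddleIntegrand, vacAmplitude, vacChar, Complex.exp_add]
  push_cast
  ring

lemma continuousOn_vacChar (a : ℝ) : ContinuousOn (vacChar a) {w | 0 < w.re} := by
  have hne : ∀ w ∈ {w : ℂ | 0 < w.re}, w ≠ 0 := fun _ => Complex.ne_zero_of_re_pos
  have hpow : ContinuousOn (fun w : ℂ => w ^ (-(1 / 2) : ℂ)) {w | 0 < w.re} :=
    continuousOn_id.cpow_const fun _ hw => Or.inl hw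
  have hdiv (c : ℂ) : ContinuousOn (fun w : ℂ => Complex.exp (c / w)) {w | 0 < w.re} :=
    (continuousOn_const.div continuousOn_id hne).cexp
  exact (hpow.mul (hdiv a)).mul (continuousOn_const.sub (hdiv _))

lemma measurable_vacAmplitude (a : ℝ) (β : ℂ) : Measurable (vacAmplitude a β) := by
  unfold vacAmplitude vacChar
  fun_prop

lemma norm_one_sub_exp_neg_div_le {c : ℝ} (hc : 0 ≤ c) {z : ℂ} (hz : 0 < z.re) :
    ‖1 - Complex.exp (-c / z)‖ ≤ 2 := by
  have hre : (-(c : ℂ) / z).re ≤ 0 := by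
    rw [div_eq_mul_inv, ← Complex.ofReal_neg, Complex.re_ofReal_mul]
    exact mul_nonpos_of_nonpos_of_nonneg (neg_nonpos.2 hc) (re_inv_pos hz).le
  have hexp : ‖Complex.exp (-c / z)‖ ≤ 1 := by
    rw [Complex.norm_exp]
    exact Real.exp_le_one_iff.2 hre
  have htri := norm_sub_le (1 : ℂ) (Complex.exp (-c / z))
  rw [norm_one] at htri
  linarith

lemma exists_bound_vacAmplitude (a T : ℝ) {β : ℂ} (hβ : 0 < β.re) :
    ∃ C, ∀ᶠ s : ℝ in 𝓝[>] 0, ∀ t : ℝ, |t| ≤ T → ‖vacAmplitude a β (s + t * I)‖ ≤ C := by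
  have hcompact : IsCompact (Set.Icc 0 (β.re / 2) ×ℂ Set.Icc (-T) T) :=
    isCompact_Icc.reProdIm isCompact_Icc
  have hcont : ContinuousOn (fun z => vacChar a (β - z))
      (Set.Icc 0 (β.re / 2) ×ℂ Set.Icc (-T) T) := by
    refine (continuousOn_vacChar a).comp (by fun_prop) fun z hz => ?_
    have hz_re : z.re ≤ β.re / 2 := hz.1.2
    simp only [Set.mem_ofPred_eq, Complex.sub_re]
    linarith
  obtain ⟨C, hC⟩ := hcompact.exists_bound_of_continuousOn hcont
  refine ⟨2 * C, ?_⟩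
  filter_upwards [Ioc_mem_nhdsGT (half_pos hβ)] with s hs t ht
  have hmem : (s : ℂ) + t * I ∈ Set.Icc 0 (β.re / 2) ×ℂ Set.Icc (-T) T := by
    simpa [Complex.mem_reProdIm, hs.1.le, hs.2] using abs_le.1 ht
  have hfactor := norm_one_sub_exp_neg_div_le (c := 4 * π ^ 2) (by positivity)
    (z := s + t * I) (by simpa using hs.1)
  push_cast at hfactor
  rw [vacAmplitude, norm_mul]
  exact mul_le_mul hfactor (hC _ hmem) (norm_nonneg _) zero_le_two

lemma tendsto_vacAmplitude (a : ℝ) {β : ℂ} (hβ : 0 < β.re) :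
    Tendsto (vacAmplitude a β) horocyclicZero (𝓝 (vacChar a β)) := by
  have hexp : Tendsto (fun z : ℂ => Complex.exp (-(4 * (π : ℂ) ^ 2) / z)) horocyclicZero (𝓝 0) := by
    have hexp_real := tendsto_exp_neg_div_horocyclicZero (c := 4 * π ^ 2) (by positivity)
    push_cast at hexp_real
    exact hexp_real
  have hchar : ContinuousAt (vacChar a) (β - 0) :=
    (continuousOn_vacChar a).continuousAt
      ((isOpen_lt continuous_const Complex.continuous_re).mem_nhds (by simpa using hβ))
  have hcomp : Tendsto (fun z => vacChar a (β - z)) horocyclicZero (𝓝 (vacChar a (β - 0))) :=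
    hchar.tendsto.comp ((tendsto_const_nhds.sub tendsto_id).mono_left horocyclicZero_le_nhds)
  have hprod := (hexp.const_sub 1).mul hcomp
  rwa [sub_zero, sub_zero, one_mul] at hprod

lemma sqrt_mul_vacChar {β : ℂ} (hβ : 0 < β.re) (a : ℝ) :
    √(2 * π) * vacChar a β = (2 * (π : ℂ) / β) ^ ((1 : ℂ) / 2) * Complex.exp (a / β) *
      (1 - Complex.exp (-(4 * (π : ℂ) ^ 2) / β)) := by
  have hsqrt := ofReal_div_cpow_of_re_pos (r := 2 * π) (by positivity) hβ (1 / 2)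
  rw [ofReal_cpow_one_half (by positivity)] at hsqrt
  push_cast at hsqrt
  rw [hsqrt, vacChar]
  ring

lemma sqrt_four_pi_sq_mul (y : ℝ) : √(4 * π ^ 2 * y) = 2 * π * √y := by
  rw [show 4 * π ^ 2 = (2 * π) ^ 2 by ring, Real.sqrt_mul (by positivity),
    Real.sqrt_sq (by positivity)]

lemma cpow_one_half_four_pi_sq_div_mul {z w : ℂ} (hz : 0 < z.re) (hw : 0 < w.re) :
    (4 * (π : ℂ) ^ 2 / (z * w)) ^ ((1 : ℂ) / 2) =
      2 * π * z ^ (-(1 / 2) : ℂ) * w ^ (-(1 / 2) : ℂ) := by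
  have hπ : √(4 * π ^ 2) = 2 * π := by simpa using sqrt_four_pi_sq_mul 1
  have hre : 0 < (((4 * π ^ 2 : ℝ) : ℂ) / z).re := by
    rw [div_eq_mul_inv, Complex.re_ofReal_mul]
    exact mul_pos (by positivity) (re_inv_pos hz)
  have hsplit : 4 * (π : ℂ) ^ 2 / (z * w) = ((4 * π ^ 2 : ℝ) : ℂ) / z * w⁻¹ := by
    push_cast
    rw [← div_div, div_eq_mul_inv _ w]
  rw [hsplit, mul_cpow_of_re_pos hre (re_inv_pos hw), inv_cpow_of_re_pos hw,
    ofReal_div_cpow_of_re_pos (by positivity) hz, ofReal_cpow_one_half (by positivity), hπ]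
  push_cast
  rfl

lemma zline_eq (A : ℝ) (J : ℤ) (t : ℝ) :
    zline A J t = √(4 * π ^ 2 * A / J) + t * I := by
  rw [zline, mul_div_assoc, sqrt_four_pi_sq_mul]

lemma Fvac_eq_integral_saddleIntegrand {A : ℝ} {βL : ℂ} {J : ℤ}
    (hpos : 0 < √(4 * π ^ 2 * A / J)) (hlt : √(4 * π ^ 2 * A / J) < βL.re) :
    Fvac A βL J = ∫ t in (-π)..π, saddleIntegrand (4 * π ^ 2 * A) (1 / 2) J
      (vacAmplitude (4 * π ^ 2 * A) βL) (√(4 * π ^ 2 * A / J) + t * I) := by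
  refine intervalIntegral.integral_congr fun t _ => ?_
  simp only [← zline_eq, saddleIntegrand_vacAmplitude]
  have hre : (zline A J t).re = √(4 * π ^ 2 * A / J) := by simp [zline_eq]
  have hπ : (π : ℂ) ≠ 0 := Complex.ofReal_ne_zero.2 pi_ne_zero
  rw [cpow_one_half_four_pi_sq_div_mul (hre ▸ hpos) (by rwa [Complex.sub_re, hre, sub_pos]),
    vacChar, vacChar, Complex.exp_add, Complex.real_smul]
  push_cast
  field_simp

lemma sqrt_div_rpow_mul_sqrt_sqrt_mul {a J : ℝ} (ha : 0 < a) (hJ : 0 < J) :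
    √(a / J) ^ ((1 : ℝ) / 2 - 1) * √(√(a * J)) = √J := by
  rw [show (1 : ℝ) / 2 - 1 = -(1 / 2) by norm_num, Real.rpow_neg (Real.sqrt_nonneg _),
    ← Real.sqrt_eq_rpow, ← Real.sqrt_inv, ← Real.sqrt_mul (by positivity),
    ← Real.sqrt_inv, ← Real.sqrt_mul (by positivity),
    show (a / J)⁻¹ * (a * J) = J ^ 2 by field_simp, Real.sqrt_sq hJ.le]

lemma saddle_prefactor_eq {A J : ℝ} (hA : 0 < A) (hJ : 0 < J) :
    √(2 * J) * Real.exp (-(4 * π * √(A * J))) =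
      √2 * (√(4 * π ^ 2 * A / J) ^ ((1 : ℝ) / 2 - 1) * √(√(4 * π ^ 2 * A * J)) *
        Real.exp (-(2 * √(4 * π ^ 2 * A * J)))) := by
  rw [sqrt_div_rpow_mul_sqrt_sqrt_mul (by positivity) hJ, mul_assoc (4 * π ^ 2) A J,
    sqrt_four_pi_sq_mul, Real.sqrt_mul zero_le_two]
  ring_nf

lemma tendsto_sqrt_div_intCast (a : ℝ) : Tendsto (fun J : ℤ => √(a / J)) atTop (𝓝 0) := by
  have hdiv : Tendsto (fun J : ℤ => a / (J : ℝ)) atTop (𝓝 0) :=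
    tendsto_const_nhds.div_atTop tendsto_intCast_atTop_atTop
  simpa using hdiv.sqrt

/-- Lemma (saddle point limit of the vacuum term): for fixed `β_L` with `Re β_L > 0`,
`√(2J) e^(-4π√(AJ)) F_vac(β_L, J) → √(2π/β_L) e^(4π²A/β_L) (1 - e^(-4π²/β_L))`. -/
theorem Fvac_limit
    (A : ℝ) (hA : 0 < A) (βL : ℂ) (hβL : 0 < βL.re) :
    Tendsto
      (fun J : ℤ =>
        ((Real.sqrt (2 * (J : ℝ)) * Real.exp (-(4 * π * Real.sqrt (A * (J : ℝ)))) : ℝ) : ℂ) *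
          Fvac A βL J)
      atTop
      (𝓝 ((2 * (π : ℂ) / βL) ^ ((1 : ℂ) / 2) * Complex.exp (4 * (π : ℂ) ^ 2 * (A : ℂ) / βL) *
        (1 - Complex.exp (-(4 * (π : ℂ) ^ 2) / βL)))) := by
  have ha : 0 < 4 * π ^ 2 * A := by positivity
  obtain ⟨C, hC⟩ := exists_bound_vacAmplitude (4 * π ^ 2 * A) π hβL
  have hlim := ((tendsto_integral_saddleIntegrand ha pi_pos one_half_pos.le
    (measurable_vacAmplitude _ βL) hC (tendsto_vacAmplitude _ hβL)).comp
      tendsto_intCast_atTop_atTop).const_mul (√2 : ℂ)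
  rw [← mul_assoc, ← Complex.ofReal_mul, ← Real.sqrt_mul zero_le_two, sqrt_mul_vacChar hβL] at hlim
  push_cast at hlim
  refine hlim.congr' ?_
  filter_upwards [eventually_gt_atTop 0,
    (tendsto_sqrt_div_intCast (4 * π ^ 2 * A)).eventually_lt_const hβL] with J hJ hJβ
  have hJ' : (0 : ℝ) < J := Int.cast_pos.2 hJ
  rw [saddle_prefactor_eq hA hJ',
    Fvac_eq_integral_saddleIntegrand (Real.sqrt_pos.2 (div_pos ha hJ')) hJβ]
  simp only [Function.comp_apply]
  push_cast
  ring
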